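/- (1D supersolution.) Let N = 1, Ω = (0,∞), s ∈ (1/2,1), and let L_Ω be either the operator L_Ω u(x) = PV ∫_0^∞ (u(x)−u(y)) K_Ω(x,y) dy with K_Ω(x,y) = c_{1,s}|x−y|^{−1−2s} + k_Ω(x,y), or the regional fractional Laplacian L_Ω u(x) = c_{1,s} PV ∫_0^∞ (u(x)−u(y))|x−y|^{−1−2s} dy. Fix r₀ > 0 and let η ∈ C_0^∞([0,2r₀)) satisfy 0 ≤ η ≤ 1 and η = 1 on [0,r₀]. Then the function φ̄(x) := η(x) x^{2s−1} satisfies L_Ω φ̄(x) ≥ c̄ for all x ∈ (0,r₀), for some constant c̄ > 0 depending only on s and r₀. Moreover, in the case of the kernel K_Ω = c_{1,s}|x−y|^{−1−2s} + k_Ω, the stronger bound L_Ω φ̄(x) ≥ c̄ (1 + log^−(x/r₀)) holds for all x ∈ (0,r₀). -/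

import Mathlib

open MeasureTheory Metric Set Filter Topology
open scoped ENNReal NNReal

noncomputable section

/-- The normalizing constant `c_{N,s}` of the fractional Laplacian. -/
def cNs (N : ℕ) (s : ℝ) : ℝ :=
  (2:ℝ) ^ (2 * s) * Real.Gamma ((N : ℝ) / 2 + s) /
    (Real.pi ^ ((N : ℝ) / 2) * |Real.Gamma (-s)|)

/-- `log⁻ t = max 0 (−log t)`. -/
def logNeg (t : ℝ) : ℝ := max 0 (-Real.log t)

/-- The one-dimensional kernel `k_Ω` for `Ω = (0,∞)`. -/
def k1 (s : ℝ) (x y : ℝ) : ℝ :=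
  cNs 1 s * ∫ z in Set.Iic (0:ℝ),
    (|x - z| ^ (1 + 2 * s) * |y - z| ^ (1 + 2 * s) *
      ∫ w in Set.Ioi (0:ℝ), |z - w| ^ (-(1:ℝ) - 2 * s))⁻¹

/-- The one-dimensional kernel `K_Ω = c_{1,s}|x-y|^{-1-2s} + k_Ω(x,y)` of the Neumann
problem for the fractional Laplacian on `Ω = (0,∞)`. -/
def neumannKer1 (s : ℝ) (x y : ℝ) : ℝ :=
  cNs 1 s * |x - y| ^ (-(1:ℝ) - 2 * s) + k1 s x y

/-- The kernel of the one-dimensional regional fractional Laplacian on `(0,∞)`. -/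
def regionalKer1 (s : ℝ) (x y : ℝ) : ℝ :=
  cNs 1 s * |x - y| ^ (-(1:ℝ) - 2 * s)

/-- `L_Ω u (x) = PV ∫_0^∞ (u(x)-u(y)) K(x,y) dy` exists and has value `l`. -/
def HasPV1 (K : ℝ → ℝ → ℝ) (u : ℝ → ℝ) (x l : ℝ) : Prop :=
  Filter.Tendsto
    (fun ε : ℝ => ∫ y in {y : ℝ | 0 < y ∧ ε < |x - y|}, (u x - u y) * K x y)
    (𝓝[>] (0:ℝ)) (𝓝 l)

/-- The bilinear form on `(0,∞) × (0,∞)` associated with a kernel. -/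
def BForm1 (K : ℝ → ℝ → ℝ) (u v : ℝ → ℝ) : ℝ :=
  ∫ x in Set.Ioi (0:ℝ), ∫ y in Set.Ioi (0:ℝ), (u x - u y) * (v x - v y) * K x y

/-- `α` is an admissible exponent of the one-dimensional boundary regularity theorem
(Theorem `Thm:BoundaryRegBH`) for the operator with kernel `K` on `(0,∞)`: every
solution `u` of `L u = f` on `(0,2R)` with `u(0) = 0`, `f ∈ L^∞`, and growth
`|u(y)| ≤ c₀ (1 + y^{2s-ε₀})` with `ε₀ > 1`, satisfies the corresponding interior-to-boundary
`C^α` estimate for `u(x)/x^{2s-1}`. -/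
def BoundaryRegExponent (s : ℝ) (K : ℝ → ℝ → ℝ) (α : ℝ) : Prop :=
  α ∈ Set.Ioo (0:ℝ) 1 ∧
    ∀ c₀ > (0:ℝ), ∀ ε₀ > (1:ℝ), ∃ C > (0:ℝ), ∀ R > (0:ℝ), ∀ u f : ℝ → ℝ,
      (∀ x ∈ Set.Ioo (0:ℝ) (2 * R), HasPV1 K u x (f x)) → u 0 = 0 →
      (∀ y > (0:ℝ), |u y| ≤ c₀ * (1 + y ^ (2 * s - ε₀))) →
      ∀ Mu Mf : ℝ, (∀ x ∈ Set.Ioo (0:ℝ) (2 * R), |u x| ≤ Mu) →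
        (∀ x ∈ Set.Ioo (0:ℝ) (2 * R), |f x| ≤ Mf) →
        ∀ x ∈ Set.Ioc (0:ℝ) R, ∀ y ∈ Set.Ioc (0:ℝ) R,
          |u x / x ^ (2 * s - 1) - u y / y ^ (2 * s - 1)| ≤
            C * R ^ (1 - 2 * s) * (|x - y| / R) ^ α * (Mu + R ^ (2 * s) * Mf)

end
noncomputable section

/-!
Write `L` for the operator with kernel `K`. Both kernels are symmetric and homogeneous of degree
`-1 - 2s`, so the inversion `y ↦ x² / y` turns `(x^{2s-1} - y^{2s-1}) K(x, y) dy` on `(x, ∞)` into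
its own negative on `(0, x)`. The inversion distorts the excluded interval `(x - ε, x + ε)` only to
second order, which the singularity of `K` cannot see, hence `L t^{2s-1} = 0` as a principal value.
Cutting off therefore leaves `L (η t^{2s-1}) (x) = ∫_0^∞ (1 - η(y)) y^{2s-1} K(x, y) dy` for
`x < r₀`, and this is bounded below by the part `y > 2r₀`, where `1 - η = 1`. There
`|x - y|^{-1-2s} ≥ y^{-1-2s}`, and the exterior points `z ∈ (-r₀, -x)` contribute at least a
multiple of `y^{-1-2s} ∫_x^{r₀} dt / t = y^{-1-2s} log (r₀ / x)` to `k_Ω(x, y)`.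
-/

lemma cNs_pos (N : ℕ) {s : ℝ} (hs : s ∈ Ioo (0 : ℝ) 1) : 0 < cNs N s := by
  obtain ⟨hs0, hs1⟩ := hs
  have hGamma_neg : Real.Gamma (-s) ≠ 0 := by
    refine Real.Gamma_ne_zero fun m hm => ?_
    have hsm : s = m := neg_injective hm
    rw [hsm] at hs0 hs1
    norm_cast at hs0 hs1
    lia
  unfold cNs
  positivity

lemma integral_Ioi_add_rpow {a m : ℝ} (ha : a < -1) (hm : 0 < m) :
    ∫ t in Ioi (0 : ℝ), (t + m) ^ a = -m ^ (a + 1) / (a + 1) := by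
  have htranslate := (measurePreserving_add_right volume m).setIntegral_preimage_emb
    (measurableEmbedding_addRight m) (fun t => t ^ a) (Ioi m)
  rwa [preimage_add_const_Ioi, sub_self, integral_Ioi_rpow_of_lt ha hm] at htranslate

lemma integral_Ioi_abs_sub_rpow {s z : ℝ} (hs : 0 < s) (hz : z < 0) :
    ∫ w in Ioi (0 : ℝ), |z - w| ^ (-1 - 2 * s) = (-z) ^ (-(2 * s)) / (2 * s) := by
  have habs : EqOn (fun w => |z - w| ^ (-1 - 2 * s)) (fun w => (w + -z) ^ (-1 - 2 * s)) (Ioi 0) :=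
    fun w (hw : 0 < w) => by
      simp only [abs_of_neg (show z - w < 0 by linarith), neg_sub, ← sub_eq_add_neg]
  rw [setIntegral_congr_fun measurableSet_Ioi habs,
    integral_Ioi_add_rpow (by linarith) (neg_pos.2 hz),
    show -1 - 2 * s + 1 = -(2 * s) by ring, neg_div_neg_eq]

/-- The integrand of `k_Ω(x, y)` at the exterior point `z = -t`, up to the factor `2 s c_{1,s}`: the
weight `∫_0^∞ |z - w|^{-1-2s} dw` equals `t^{-2s} / (2s)`. -/
def exteriorDensity (s x y t : ℝ) : ℝ :=
  t ^ (2 * s) * (x + t) ^ (-1 - 2 * s) * (y + t) ^ (-1 - 2 * s)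

section ExteriorKernel

variable {s x y : ℝ}

lemma k1_eq_integral_exteriorDensity (hs : 0 < s) (hx : 0 < x) (hy : 0 < y) :
    k1 s x y = cNs 1 s * (2 * s) * ∫ t in Ioi (0 : ℝ), exteriorDensity s x y t := by
  have hreflect := integral_comp_neg_Ioi 0 fun z =>
    (|x - z| ^ (1 + 2 * s) * |y - z| ^ (1 + 2 * s) *
      ∫ w in Ioi (0 : ℝ), |z - w| ^ (-1 - 2 * s))⁻¹
  rw [neg_zero] at hreflect
  rw [k1, ← hreflect, mul_assoc (cNs 1 s)]
  congr 1
  rw [← integral_const_mul]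
  refine setIntegral_congr_fun measurableSet_Ioi ?_
  intro t (ht : 0 < t)
  have hexp : -1 - 2 * s = -(1 + 2 * s) := by ring
  simp only [exteriorDensity]
  rw [integral_Ioi_abs_sub_rpow hs (neg_neg_of_pos ht), neg_neg, sub_neg_eq_add, sub_neg_eq_add,
    abs_of_pos (by positivity), abs_of_pos (by positivity), hexp, Real.rpow_neg (by positivity),
    Real.rpow_neg (by positivity), Real.rpow_neg (by positivity)]
  simp only [mul_inv, div_eq_mul_inv, inv_inv]
  ring

lemma exteriorDensity_comm (s x y t : ℝ) : exteriorDensity s x y t = exteriorDensity s y x t :=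
  mul_right_comm _ _ _

lemma exteriorDensity_nonneg {t : ℝ} (hx : 0 < x) (hy : 0 < y) (ht : 0 < t) :
    0 ≤ exteriorDensity s x y t := by
  unfold exteriorDensity
  positivity

lemma exteriorDensity_le {t : ℝ} (hs : 0 < s) (hy : 0 < y) (hyx : y ≤ x) (ht : 0 < t) :
    exteriorDensity s x y t ≤ x ^ (-1 - s) * (t + y) ^ (-1 - s) := by
  have hx : 0 < x := hy.trans_le hyx
  have hsplit : (x + t) ^ (-1 - 2 * s) = (x + t) ^ (-1 - s) * (x + t) ^ (-s) := by
    rw [← Real.rpow_add (by positivity)]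
    ring_nf
  have hjoin : (y + t) ^ (2 * s) * (y + t) ^ (-s) * (y + t) ^ (-1 - 2 * s) =
      (t + y) ^ (-1 - s) := by
    rw [← Real.rpow_add (by positivity), ← Real.rpow_add (by positivity), add_comm y t]
    ring_nf
  calc exteriorDensity s x y t
      = t ^ (2 * s) * ((x + t) ^ (-1 - s) * (x + t) ^ (-s)) * (y + t) ^ (-1 - 2 * s) := by
        rw [exteriorDensity, hsplit]
    _ ≤ (y + t) ^ (2 * s) * (x ^ (-1 - s) * (y + t) ^ (-s)) * (y + t) ^ (-1 - 2 * s) := by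
        gcongr ?_ * (?_ * ?_) * _
        · exact Real.rpow_le_rpow ht.le (by linarith) (by linarith)
        · exact Real.rpow_le_rpow_of_nonpos hx (by linarith) (by linarith)
        · exact Real.rpow_le_rpow_of_nonpos (by positivity) (by linarith) (by linarith)
    _ = x ^ (-1 - s) * (t + y) ^ (-1 - s) := by rw [← hjoin]; ring

lemma integrableOn_exteriorDensity (hs : 0 < s) (hx : 0 < x) (hy : 0 < y) :
    IntegrableOn (exteriorDensity s x y) (Ioi 0) := by
  wlog hyx : y ≤ x generalizing x y
  · exact (this hy hx (le_of_not_ge hyx)).congr_fun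
      (fun t _ => exteriorDensity_comm s y x t) measurableSet_Ioi
  have hmeas : Measurable (exteriorDensity s x y) := by
    unfold exteriorDensity
    fun_prop
  have hdom : IntegrableOn (fun t => x ^ (-1 - s) * (t + y) ^ (-1 - s)) (Ioi 0) :=
    (integrableOn_add_rpow_Ioi_of_lt (by linarith) (neg_neg_of_pos hy)).const_mul _
  refine Integrable.mono' hdom hmeas.aestronglyMeasurable ?_
  filter_upwards [ae_restrict_mem measurableSet_Ioi] with t ht
  rw [Real.norm_of_nonneg (exteriorDensity_nonneg hx hy ht)]
  exact exteriorDensity_le hs hy hyx ht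

lemma integral_exteriorDensity_le (hs : 0 < s) (hy : 0 < y) (hyx : y ≤ x) :
    ∫ t in Ioi (0 : ℝ), exteriorDensity s x y t ≤ x ^ (-1 - s) * (y ^ (-s) / s) := by
  have hvalue : ∫ t in Ioi (0 : ℝ), (t + y) ^ (-1 - s) = y ^ (-s) / s := by
    rw [integral_Ioi_add_rpow (by linarith) hy, show -1 - s + 1 = -s by ring, neg_div_neg_eq]
  rw [← hvalue, ← integral_const_mul]
  exact setIntegral_mono_on (integrableOn_exteriorDensity hs (hy.trans_le hyx) hy)
    ((integrableOn_add_rpow_Ioi_of_lt (by linarith) (neg_neg_of_pos hy)).const_mul _)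
    measurableSet_Ioi fun t ht => exteriorDensity_le hs hy hyx ht

lemma exteriorDensity_mul {a t : ℝ} (ha : 0 < a) (hx : 0 < x) (hy : 0 < y) (ht : 0 < t) :
    a * exteriorDensity s (a * x) (a * y) (a * t) =
      a ^ (-1 - 2 * s) * exteriorDensity s x y t := by
  have hexp : a * a ^ (2 * s) * a ^ (-1 - 2 * s) = 1 := by
    calc a * a ^ (2 * s) * a ^ (-1 - 2 * s)
        = a ^ (1 + 2 * s + (-1 - 2 * s)) := by
          rw [Real.rpow_add ha, Real.rpow_add ha, Real.rpow_one]
      _ = 1 := by rw [show 1 + 2 * s + (-1 - 2 * s) = 0 by ring, Real.rpow_zero]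
  simp only [exteriorDensity, ← mul_add]
  rw [Real.mul_rpow ha.le ht.le, Real.mul_rpow ha.le (by positivity),
    Real.mul_rpow ha.le (by positivity)]
  linear_combination (t ^ (2 * s) * a ^ (-1 - 2 * s) * (x + t) ^ (-1 - 2 * s) *
    (y + t) ^ (-1 - 2 * s)) * hexp

lemma k1_comm (s x y : ℝ) : k1 s x y = k1 s y x := by
  simp only [k1, mul_comm (|x - _| ^ (1 + 2 * s))]

lemma measurable_k1 (s x : ℝ) : Measurable (k1 s x) := by
  have hweight : StronglyMeasurable fun z : ℝ => ∫ w in Ioi (0 : ℝ), |z - w| ^ (-1 - 2 * s) :=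
    StronglyMeasurable.integral_prod_right (Measurable.stronglyMeasurable (by fun_prop))
  have hintegral : StronglyMeasurable fun y : ℝ => ∫ z in Iic (0 : ℝ),
      (|x - z| ^ (1 + 2 * s) * |y - z| ^ (1 + 2 * s) *
        ∫ w in Ioi (0 : ℝ), |z - w| ^ (-1 - 2 * s))⁻¹ :=
    StronglyMeasurable.integral_prod_right <| Measurable.stronglyMeasurable <| Measurable.inv <|
      Measurable.mul (by fun_prop) (hweight.measurable.comp measurable_snd)
  exact hintegral.measurable.const_mul _

lemma k1_nonneg (hs : s ∈ Ioo (0 : ℝ) 1) (x y : ℝ) : 0 ≤ k1 s x y :=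
  mul_nonneg (cNs_pos 1 hs).le <| integral_nonneg fun z => inv_nonneg.2 <|
    mul_nonneg (by positivity) <| integral_nonneg fun w => by positivity

lemma k1_mul_mul {a : ℝ} (hs : 0 < s) (ha : 0 < a) (hx : 0 < x) (hy : 0 < y) :
    k1 s (a * x) (a * y) = a ^ (-1 - 2 * s) * k1 s x y := by
  have hscale := integral_comp_mul_left_Ioi' (exteriorDensity s (a * x) (a * y)) 0 ha
  rw [mul_zero, smul_eq_mul, ← integral_const_mul] at hscale
  rw [k1_eq_integral_exteriorDensity hs (by positivity) (by positivity),
    k1_eq_integral_exteriorDensity hs hx hy, mul_left_comm (a ^ _), ← hscale]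
  congr 1
  rw [← integral_const_mul]
  exact setIntegral_congr_fun measurableSet_Ioi fun _ ht => exteriorDensity_mul ha hx hy ht

lemma k1_le (hs : s ∈ Ioo (0 : ℝ) 1) (hy : 0 < y) (hyx : y < x) :
    k1 s x y ≤ 2 * cNs 1 s * (x - y) ^ (-1 - 2 * s) * (x / y) ^ s := by
  have hc := cNs_pos 1 hs
  have hs0 := hs.1
  have hx : 0 < x := hy.trans hyx
  have hpow : x ^ (-1 - s) * y ^ (-s) = x ^ (-1 - 2 * s) * (x / y) ^ s := by
    rw [Real.div_rpow hx.le hy.le, Real.rpow_neg hy.le, ← div_eq_mul_inv, ← mul_div_assoc,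
      ← Real.rpow_add hx]
    ring_nf
  calc k1 s x y
      ≤ cNs 1 s * (2 * s) * (x ^ (-1 - s) * (y ^ (-s) / s)) := by
        rw [k1_eq_integral_exteriorDensity hs0 hx hy]
        gcongr
        exact integral_exteriorDensity_le hs0 hy hyx.le
    _ = 2 * cNs 1 s * (x ^ (-1 - s) * y ^ (-s)) := by field_simp
    _ = 2 * cNs 1 s * x ^ (-1 - 2 * s) * (x / y) ^ s := by rw [hpow, mul_assoc (2 * cNs 1 s)]
    _ ≤ 2 * cNs 1 s * (x - y) ^ (-1 - 2 * s) * (x / y) ^ s := by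
        gcongr 2 * cNs 1 s * ?_ * _
        exact Real.rpow_le_rpow_of_nonpos (sub_pos.2 hyx) (by linarith) (by linarith)

lemma inv_mul_rpow_le_exteriorDensity {t : ℝ} (hs : 0 < s) (hx : 0 < x) (hxt : x ≤ t)
    (hty : t ≤ y) :
    4 ^ (-1 - 2 * s) * y ^ (-1 - 2 * s) * t⁻¹ ≤ exteriorDensity s x y t := by
  have ht : 0 < t := hx.trans_le hxt
  have hy : 0 < y := ht.trans_le hty
  have hinv : t⁻¹ = t ^ (2 * s) * t ^ (-1 - 2 * s) := by
    rw [← Real.rpow_add ht, ← Real.rpow_neg_one]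
    ring_nf
  calc 4 ^ (-1 - 2 * s) * y ^ (-1 - 2 * s) * t⁻¹
      = t ^ (2 * s) * (2 * t) ^ (-1 - 2 * s) * (2 * y) ^ (-1 - 2 * s) := by
        rw [Real.mul_rpow two_pos.le ht.le, Real.mul_rpow two_pos.le hy.le,
          show (4 : ℝ) = 2 * 2 by norm_num, Real.mul_rpow two_pos.le two_pos.le, hinv]
        ring
    _ ≤ exteriorDensity s x y t := by
        unfold exteriorDensity
        gcongr _ * ?_ * ?_
        · exact Real.rpow_le_rpow_of_nonpos (by positivity) (by linarith) (by linarith)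
        · exact Real.rpow_le_rpow_of_nonpos (by positivity) (by linarith) (by linarith)

lemma log_mul_rpow_le_integral_exteriorDensity {r : ℝ} (hs : 0 < s) (hx : 0 < x) (hxr : x ≤ r)
    (hry : r ≤ y) :
    4 ^ (-1 - 2 * s) * y ^ (-1 - 2 * s) * Real.log (r / x) ≤
      ∫ t in Ioi (0 : ℝ), exteriorDensity s x y t := by
  have hr : 0 < r := hx.trans_le hxr
  have hy : 0 < y := hr.trans_le hry
  have hint := integrableOn_exteriorDensity hs hx hy
  have hsub : Ioc x r ⊆ Ioi 0 := fun t ht => hx.trans ht.1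
  have hinv : IntegrableOn (fun t : ℝ => t⁻¹) (Ioc x r) := by
    rw [← intervalIntegrable_iff_integrableOn_Ioc_of_le hxr, intervalIntegrable_inv_iff]
    exact Or.inr (notMem_uIcc_of_lt hx hr)
  calc 4 ^ (-1 - 2 * s) * y ^ (-1 - 2 * s) * Real.log (r / x)
      = ∫ t in Ioc x r, 4 ^ (-1 - 2 * s) * y ^ (-1 - 2 * s) * t⁻¹ := by
        rw [integral_const_mul, ← intervalIntegral.integral_of_le hxr, integral_inv_of_pos hx hr]
    _ ≤ ∫ t in Ioc x r, exteriorDensity s x y t :=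
        setIntegral_mono_on (hinv.const_mul _) (hint.mono_set hsub) measurableSet_Ioc fun t ht =>
          inv_mul_rpow_le_exteriorDensity hs hx ht.1.le (ht.2.trans hry)
    _ ≤ ∫ t in Ioi (0 : ℝ), exteriorDensity s x y t := by
        refine setIntegral_mono_set hint ?_ hsub.eventuallyLE
        filter_upwards [ae_restrict_mem measurableSet_Ioi] with t ht
        exact exteriorDensity_nonneg hx hy ht

end ExteriorKernel

/-- A nonnegative symmetric kernel on `(0,∞)²` with the scaling of `|x - y|^{-1-2s}` and its
singularity on the diagonal. The factor `(x / y) ^ s` leaves room for the logarithmic growth of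
`k_Ω(x, y)` as `y → 0` while keeping powers of `y` integrable there. -/
structure IsStableLikeKernel (s : ℝ) (K : ℝ → ℝ → ℝ) : Prop where
  aestronglyMeasurable : ∀ x, AEStronglyMeasurable (K x) (volume.restrict (Ioi 0))
  nonneg : ∀ x y, 0 < x → 0 < y → 0 ≤ K x y
  symm : ∀ x y, 0 < x → 0 < y → K x y = K y x
  map_mul_mul : ∀ a x y, 0 < a → 0 < x → 0 < y → K (a * x) (a * y) = a ^ (-1 - 2 * s) * K x y
  exists_le : ∃ A, 0 ≤ A ∧ ∀ x y, 0 < y → y < x → K x y ≤ A * (x - y) ^ (-1 - 2 * s) * (x / y) ^ s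

lemma IsStableLikeKernel.add {s : ℝ} {K K' : ℝ → ℝ → ℝ} (hK : IsStableLikeKernel s K)
    (hK' : IsStableLikeKernel s K') : IsStableLikeKernel s fun x y => K x y + K' x y where
  aestronglyMeasurable x := (hK.aestronglyMeasurable x).add (hK'.aestronglyMeasurable x)
  nonneg x y hx hy := add_nonneg (hK.nonneg x y hx hy) (hK'.nonneg x y hx hy)
  symm x y hx hy := by rw [hK.symm x y hx hy, hK'.symm x y hx hy]
  map_mul_mul a x y ha hx hy := by
    rw [hK.map_mul_mul a x y ha hx hy, hK'.map_mul_mul a x y ha hx hy, mul_add]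
  exists_le := by
    obtain ⟨A, hA, hle⟩ := hK.exists_le
    obtain ⟨A', hA', hle'⟩ := hK'.exists_le
    refine ⟨A + A', add_nonneg hA hA', fun x y hy hyx => ?_⟩
    linarith [hle x y hy hyx, hle' x y hy hyx]

lemma isStableLikeKernel_regionalKer1 {s : ℝ} (hs : s ∈ Ioo (0 : ℝ) 1) :
    IsStableLikeKernel s (regionalKer1 s) where
  aestronglyMeasurable x := by
    unfold regionalKer1
    exact Measurable.aestronglyMeasurable (by fun_prop)
  nonneg x y _ _ := mul_nonneg (cNs_pos 1 hs).le (by positivity)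
  symm x y _ _ := by rw [regionalKer1, regionalKer1, abs_sub_comm]
  map_mul_mul a x y ha _ _ := by
    rw [regionalKer1, ← mul_sub, abs_mul, abs_of_pos ha, Real.mul_rpow ha.le (abs_nonneg _),
      mul_left_comm, regionalKer1]
  exists_le := by
    have hc := cNs_pos 1 hs
    refine ⟨cNs 1 s, hc.le, fun x y hy hyx => ?_⟩
    have hxy : 0 < x - y := sub_pos.2 hyx
    rw [regionalKer1, abs_of_pos hxy]
    exact le_mul_of_one_le_right (by positivity)
      (Real.one_le_rpow ((one_le_div hy).2 hyx.le) hs.1.le)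

lemma isStableLikeKernel_k1 {s : ℝ} (hs : s ∈ Ioo (0 : ℝ) 1) : IsStableLikeKernel s (k1 s) where
  aestronglyMeasurable x := (measurable_k1 s x).aestronglyMeasurable
  nonneg x y _ _ := k1_nonneg hs x y
  symm x y _ _ := k1_comm s x y
  map_mul_mul _ _ _ ha hx hy := k1_mul_mul hs.1 ha hx hy
  exists_le := ⟨2 * cNs 1 s, mul_nonneg two_pos.le (cNs_pos 1 hs).le, fun _ _ => k1_le hs⟩

lemma isStableLikeKernel_neumannKer1 {s : ℝ} (hs : s ∈ Ioo (0 : ℝ) 1) :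
    IsStableLikeKernel s (neumannKer1 s) :=
  (isStableLikeKernel_regionalKer1 hs).add (isStableLikeKernel_k1 hs)

section Inversion

variable {E : Type*} [NormedAddCommGroup E] [NormedSpace ℝ E] {a c : ℝ}

lemma image_const_div_Ioo_zero (ha : 0 < a) (hc : 0 < c) :
    (fun w => a / w) '' Ioo 0 (a / c) = Ioi c := by
  ext y
  simp only [mem_image, mem_Ioo, mem_Ioi]
  constructor
  · rintro ⟨w, ⟨hw, hwc⟩, rfl⟩
    exact (lt_div_comm₀ hw hc).1 hwc
  · intro hy
    have hy0 : 0 < y := hc.trans hy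
    exact ⟨a / y, ⟨by positivity, by gcongr⟩, by field_simp⟩

lemma injective_const_div (ha : a ≠ 0) : Function.Injective fun w => a / w := by
  simpa only [div_eq_mul_inv, Function.comp_def] using (mul_right_injective₀ ha).comp inv_injective

lemma hasDerivWithinAt_const_div {w : ℝ} {t : Set ℝ} (a : ℝ) (hw : w ≠ 0) :
    HasDerivWithinAt (fun w => a / w) (-(a / w ^ 2)) t w := by
  simpa only [div_eq_mul_inv, mul_neg] using
    ((hasDerivAt_inv hw).const_mul a).hasDerivWithinAt

lemma integrableOn_Ioi_iff_integrableOn_comp_const_div (ha : 0 < a) (hc : 0 < c) (f : ℝ → E) :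
    IntegrableOn f (Ioi c) ↔ IntegrableOn (fun w => (a / w ^ 2) • f (a / w)) (Ioo 0 (a / c)) := by
  rw [← image_const_div_Ioo_zero ha hc, integrableOn_image_iff_integrableOn_abs_deriv_smul
    measurableSet_Ioo (fun w hw => hasDerivWithinAt_const_div a hw.1.ne')
    (injective_const_div ha.ne').injOn]
  simp only [abs_neg, abs_of_nonneg (div_nonneg ha.le (sq_nonneg _))]

lemma setIntegral_Ioi_eq_setIntegral_comp_const_div (ha : 0 < a) (hc : 0 < c) (f : ℝ → E) :
    ∫ y in Ioi c, f y = ∫ w in Ioo 0 (a / c), (a / w ^ 2) • f (a / w) := by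
  rw [← image_const_div_Ioo_zero ha hc, integral_image_eq_integral_abs_deriv_smul
    measurableSet_Ioo (fun w hw => hasDerivWithinAt_const_div a hw.1.ne')
    (injective_const_div ha.ne').injOn]
  simp only [abs_neg, abs_of_nonneg (div_nonneg ha.le (sq_nonneg _))]

end Inversion

lemma setOf_pos_and_lt_abs_sub_eq {x ε : ℝ} (hx : 0 < x) (hε : 0 < ε) :
    {y | 0 < y ∧ ε < |x - y|} = Ioo 0 (x - ε) ∪ Ioi (x + ε) := by
  ext y
  simp only [mem_ofPred_eq, mem_union, mem_Ioo, mem_Ioi, lt_abs]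
  grind

lemma hasPV1_sub_of_eventuallyEq_zero {K : ℝ → ℝ → ℝ} {u v : ℝ → ℝ} {x l : ℝ}
    (hu : HasPV1 K u x l)
    (hu_int : ∀ ε > 0, IntegrableOn (fun y => (u x - u y) * K x y) {y | 0 < y ∧ ε < |x - y|})
    (hv_int : IntegrableOn (fun y => v y * K x y) (Ioi 0)) (hv : v =ᶠ[𝓝 x] 0) :
    HasPV1 K (fun t => u t - v t) x (l + ∫ y in Ioi (0 : ℝ), v y * K x y) := by
  obtain ⟨δ, hδ, hball⟩ := Metric.eventually_nhds_iff.1 hv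
  refine (hu.add_const _).congr' ?_
  filter_upwards [Ioo_mem_nhdsGT hδ] with ε ⟨hε, hεδ⟩
  have hsub : {y | 0 < y ∧ ε < |x - y|} ⊆ Ioi 0 := fun y hy => hy.1
  have hfull : ∫ y in Ioi (0 : ℝ), v y * K x y =
      ∫ y in {y | 0 < y ∧ ε < |x - y|}, v y * K x y := by
    refine setIntegral_eq_of_subset_of_forall_sdiff_eq_zero measurableSet_Ioi hsub ?_
    intro y ⟨hy, hyε⟩
    have hdist : |x - y| ≤ ε := not_lt.1 fun h => hyε ⟨hy, h⟩
    have hzero := hball (y := y) (by rw [dist_comm, Real.dist_eq]; linarith)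
    rw [hzero, Pi.zero_apply, zero_mul]
  rw [hfull, ← integral_add (hu_int ε hε) (hv_int.mono_set hsub)]
  simp only [hv.eq_of_nhds, Pi.zero_apply, sub_zero]
  exact integral_congr_ae (.of_forall fun y => by ring)

lemma abs_rpow_sub_rpow_le {p x y : ℝ} (hp : -1 ≤ p) (hp' : p ≤ 1) (hy : 0 < y) (hyx : y ≤ x) :
    |x ^ p - y ^ p| ≤ x ^ p * ((x - y) / y) := by
  have hx : 0 < x := hy.trans_le hyx
  have ht : 0 < y / x := by positivity
  have ht' : y / x ≤ 1 := (div_le_one hx).2 hyx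
  have hlower : y / x ≤ (y / x) ^ p := Real.self_le_rpow_of_le_one ht.le ht' hp'
  have hupper : (y / x) ^ p ≤ (y / x)⁻¹ := by
    rw [← Real.rpow_neg_one]
    exact Real.rpow_le_rpow_of_exponent_ge ht ht' hp
  have hinv : 1 - y / x ≤ (y / x)⁻¹ - 1 := by
    have := inv_mul_cancel₀ ht.ne'
    nlinarith [sq_nonneg ((y / x)⁻¹ - 1), one_le_inv_iff₀.2 ⟨ht, ht'⟩]
  calc |x ^ p - y ^ p| = x ^ p * |1 - (y / x) ^ p| := by
        rw [Real.div_rpow hy.le hx.le, ← abs_of_pos (Real.rpow_pos_of_pos hx p), ← abs_mul,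
          abs_of_pos (Real.rpow_pos_of_pos hx p)]
        congr 1
        field_simp
    _ ≤ x ^ p * ((y / x)⁻¹ - 1) := by
        gcongr
        exact abs_le.2 ⟨by linarith, by linarith⟩
    _ = x ^ p * ((x - y) / y) := by rw [inv_div, sub_div, div_self hy.ne']

/-- The integrand of `L_Ω u (x)` for the uncut power `u(t) = t^{2s-1}`. -/
def powerIntegrand (s : ℝ) (K : ℝ → ℝ → ℝ) (x y : ℝ) : ℝ :=
  (x ^ (2 * s - 1) - y ^ (2 * s - 1)) * K x y

namespace IsStableLikeKernel

variable {s x : ℝ} {K : ℝ → ℝ → ℝ}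

lemma apply_sq_div {y : ℝ} (hK : IsStableLikeKernel s K) (hx : 0 < x) (hy : 0 < y) :
    K x (x ^ 2 / y) = (y / x) ^ (1 + 2 * s) * K x y := by
  have hscaled := hK.map_mul_mul (x / y) y x (by positivity) hy hx
  rw [show x / y * y = x by field_simp, show x / y * x = x ^ 2 / y by ring, hK.symm y x hy hx,
    ← inv_div y x, Real.inv_rpow (by positivity), ← Real.rpow_neg (by positivity)] at hscaled
  rw [hscaled]
  ring_nf

lemma inversion_rpow_mul {y : ℝ} (hK : IsStableLikeKernel s K) (hx : 0 < x) (hy : 0 < y) (q : ℝ) :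
    x ^ 2 / y ^ 2 * ((x ^ 2 / y) ^ q * K x (x ^ 2 / y)) =
      x ^ (2 * q + 1 - 2 * s) * (y ^ (2 * s - 1 - q) * K x y) := by
  have hxpow : x ^ (2 * q + 1 - 2 * s) = x ^ 2 * (x ^ 2) ^ q / x ^ (1 + 2 * s) := by
    rw [← Real.rpow_natCast_mul hx.le, ← Real.rpow_natCast, ← Real.rpow_add hx, ← Real.rpow_sub hx]
    push_cast
    ring_nf
  have hypow : y ^ (2 * s - 1 - q) = y ^ (1 + 2 * s) / (y ^ 2 * y ^ q) := by
    rw [← Real.rpow_natCast, ← Real.rpow_add hy, ← Real.rpow_sub hy]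
    push_cast
    ring_nf
  rw [hK.apply_sq_div hx hy, Real.div_rpow (by positivity) hy.le, Real.div_rpow hy.le hx.le,
    hxpow, hypow]
  ring

lemma integrableOn_Ioo_rpow_mul {q b : ℝ} (hK : IsStableLikeKernel s K) (hs : 0 < s)
    (hq : s - 1 < q) (hbx : b < x) : IntegrableOn (fun y => y ^ q * K x y) (Ioo 0 b) := by
  obtain hb | hb := le_or_gt b 0
  · simp only [Ioo_eq_empty_of_le hb, integrableOn_empty]
  obtain ⟨A, hA, hle⟩ := hK.exists_le
  have hx : 0 < x := hb.trans hbx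
  have hdom : IntegrableOn (fun y => A * (x - b) ^ (-1 - 2 * s) * x ^ s * y ^ (q - s)) (Ioo 0 b) :=
    ((intervalIntegral.integrableOn_Ioo_rpow_iff hb).2 (by linarith)).const_mul _
  have hmeas : AEStronglyMeasurable (fun y => y ^ q * K x y) (volume.restrict (Ioo 0 b)) :=
    (Measurable.aestronglyMeasurable (by fun_prop)).mul
      ((hK.aestronglyMeasurable x).mono_measure (Measure.restrict_mono Ioo_subset_Ioi_self le_rfl))
  refine Integrable.mono' hdom hmeas ?_
  filter_upwards [ae_restrict_mem measurableSet_Ioo] with y ⟨hy, hyb⟩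
  have hnonneg := hK.nonneg x y hx hy
  have hdist : (x - y) ^ (-1 - 2 * s) ≤ (x - b) ^ (-1 - 2 * s) :=
    Real.rpow_le_rpow_of_nonpos (by linarith) (by linarith) (by linarith)
  rw [Real.norm_of_nonneg (by positivity)]
  calc y ^ q * K x y ≤ y ^ q * (A * (x - b) ^ (-1 - 2 * s) * (x / y) ^ s) := by
        gcongr
        exact (hle x y hy (hyb.trans hbx)).trans (by gcongr)
    _ = A * (x - b) ^ (-1 - 2 * s) * x ^ s * y ^ (q - s) := by
        rw [Real.div_rpow hx.le hy.le, Real.rpow_sub hy]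
        ring

lemma integrableOn_Ioi_rpow_mul {q c : ℝ} (hK : IsStableLikeKernel s K) (hs : 0 < s) (hx : 0 < x)
    (hq : q < s) (hxc : x < c) : IntegrableOn (fun y => y ^ q * K x y) (Ioi c) := by
  have hc : 0 < c := hx.trans hxc
  have hlt : x ^ 2 / c < x := by
    rw [div_lt_iff₀ hc, sq]
    gcongr
  rw [integrableOn_Ioi_iff_integrableOn_comp_const_div (pow_pos hx 2) hc]
  have hinverted : IntegrableOn (fun y => x ^ (2 * q + 1 - 2 * s) * (y ^ (2 * s - 1 - q) * K x y))
      (Ioo 0 (x ^ 2 / c)) :=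
    (hK.integrableOn_Ioo_rpow_mul hs (by linarith) hlt).const_mul _
  exact hinverted.congr_fun (fun y hy => (hK.inversion_rpow_mul hx hy.1 q).symm) measurableSet_Ioo

lemma integrableOn_Ioo_powerIntegrand {b : ℝ} (hK : IsStableLikeKernel s K)
    (hs : s ∈ Ioo (0 : ℝ) 1) (hbx : b < x) : IntegrableOn (powerIntegrand s K x) (Ioo 0 b) := by
  have hconst := hK.integrableOn_Ioo_rpow_mul hs.1 (sub_neg.2 hs.2) hbx
  have hpower := hK.integrableOn_Ioo_rpow_mul hs.1 (by linarith [hs.1] : s - 1 < 2 * s - 1) hbx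
  refine ((hconst.const_mul (x ^ (2 * s - 1))).sub hpower).congr (.of_forall fun y => ?_)
  simp only [powerIntegrand, Pi.sub_apply, Real.rpow_zero]
  ring

lemma integrableOn_Ioi_powerIntegrand {c : ℝ} (hK : IsStableLikeKernel s K)
    (hs : s ∈ Ioo (0 : ℝ) 1) (hx : 0 < x) (hxc : x < c) :
    IntegrableOn (powerIntegrand s K x) (Ioi c) := by
  have hconst := hK.integrableOn_Ioi_rpow_mul hs.1 hx hs.1 hxc
  have hpower := hK.integrableOn_Ioi_rpow_mul hs.1 hx (by linarith [hs.2] : 2 * s - 1 < s) hxc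
  refine ((hconst.const_mul (x ^ (2 * s - 1))).sub hpower).congr (.of_forall fun y => ?_)
  simp only [powerIntegrand, Pi.sub_apply, Real.rpow_zero]
  ring

lemma inversion_powerIntegrand {y : ℝ} (hK : IsStableLikeKernel s K) (hx : 0 < x) (hy : 0 < y) :
    x ^ 2 / y ^ 2 * powerIntegrand s K x (x ^ 2 / y) = -powerIntegrand s K x y := by
  have hconst : x ^ (2 * s - 1) * (x ^ 2 / y ^ 2 * K x (x ^ 2 / y)) = y ^ (2 * s - 1) * K x y := by
    have h := hK.inversion_rpow_mul hx hy 0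
    rw [Real.rpow_zero, one_mul, sub_zero] at h
    rw [h, ← mul_assoc, ← Real.rpow_add hx]
    ring_nf
    simp
  have hpower : x ^ 2 / y ^ 2 * ((x ^ 2 / y) ^ (2 * s - 1) * K x (x ^ 2 / y)) =
      x ^ (2 * s - 1) * K x y := by
    rw [hK.inversion_rpow_mul hx hy, sub_self, Real.rpow_zero, one_mul]
    ring_nf
  simp only [powerIntegrand]
  linear_combination hconst - hpower

lemma setIntegral_Ioi_powerIntegrand {c : ℝ} (hK : IsStableLikeKernel s K) (hx : 0 < x)
    (hc : 0 < c) :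
    ∫ y in Ioi c, powerIntegrand s K x y = -∫ y in Ioo 0 (x ^ 2 / c), powerIntegrand s K x y := by
  rw [setIntegral_Ioi_eq_setIntegral_comp_const_div (pow_pos hx 2) hc, ← integral_neg]
  exact setIntegral_congr_fun measurableSet_Ioo fun y hy => hK.inversion_powerIntegrand hx hy.1

lemma integrableOn_powerIntegrand_of_lt_abs_sub {ε : ℝ} (hK : IsStableLikeKernel s K)
    (hs : s ∈ Ioo (0 : ℝ) 1) (hx : 0 < x) (hε : 0 < ε) :
    IntegrableOn (powerIntegrand s K x) {y | 0 < y ∧ ε < |x - y|} := by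
  rw [setOf_pos_and_lt_abs_sub_eq hx hε]
  exact (hK.integrableOn_Ioo_powerIntegrand hs (by linarith)).union
    (hK.integrableOn_Ioi_powerIntegrand hs hx (by linarith))

lemma setIntegral_powerIntegrand_of_lt_abs_sub {ε : ℝ} (hK : IsStableLikeKernel s K)
    (hs : s ∈ Ioo (0 : ℝ) 1) (hε : 0 < ε) (hεx : ε < x) :
    ∫ y in {y | 0 < y ∧ ε < |x - y|}, powerIntegrand s K x y =
      -∫ y in Ico (x - ε) (x ^ 2 / (x + ε)), powerIntegrand s K x y := by
  have hx : 0 < x := hε.trans hεx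
  have hlt : x ^ 2 / (x + ε) < x := by
    rw [div_lt_iff₀ (by linarith)]
    nlinarith
  have hle : x - ε ≤ x ^ 2 / (x + ε) := by
    rw [le_div_iff₀ (by linarith)]
    nlinarith
  have hnear : IntegrableOn (powerIntegrand s K x) (Ioo 0 (x - ε)) :=
    hK.integrableOn_Ioo_powerIntegrand hs (by linarith)
  have hdiagonal : IntegrableOn (powerIntegrand s K x) (Ico (x - ε) (x ^ 2 / (x + ε))) :=
    (hK.integrableOn_Ioo_powerIntegrand hs hlt).mono_set fun y hy =>
      ⟨(sub_pos.2 hεx).trans_le hy.1, hy.2⟩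
  have hdisjoint : Disjoint (Ioo 0 (x - ε)) (Ioi (x + ε)) :=
    disjoint_left.2 fun y hy hy' => by linarith [hy.2, mem_Ioi.1 hy']
  have hdisjoint' : Disjoint (Ioo 0 (x - ε)) (Ico (x - ε) (x ^ 2 / (x + ε))) :=
    disjoint_left.2 fun y hy hy' => hy.2.not_ge hy'.1
  rw [setOf_pos_and_lt_abs_sub_eq hx hε, setIntegral_union hdisjoint measurableSet_Ioi hnear
    (hK.integrableOn_Ioi_powerIntegrand hs hx (by linarith)),
    hK.setIntegral_Ioi_powerIntegrand hx (by linarith),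
    ← Ioo_union_Ico_eq_Ioo (sub_pos.2 hεx) hle,
    setIntegral_union hdisjoint' measurableSet_Ico hnear hdiagonal]
  ring

lemma exists_norm_powerIntegrand_le (hK : IsStableLikeKernel s K) (hs : s ∈ Ioo (0 : ℝ) 1)
    (hx : 0 < x) :
    ∃ C, 0 ≤ C ∧ ∀ y ∈ Ico (x / 2) x, ‖powerIntegrand s K x y‖ ≤ C * (x - y) ^ (-(2 * s)) := by
  obtain ⟨A, hA, hle⟩ := hK.exists_le
  refine ⟨x ^ (2 * s - 1) / (x / 2) * (A * 2 ^ s), by positivity, fun y ⟨hxy, hyx⟩ => ?_⟩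
  have hy : 0 < y := by linarith
  have hsub : 0 < x - y := sub_pos.2 hyx
  have hratio : x / y ≤ 2 := by
    rw [div_le_iff₀ hy]
    linarith
  have hpow : (x - y) ^ (-(2 * s)) = (x - y) * (x - y) ^ (-1 - 2 * s) := by
    rw [← Real.rpow_one_add' hsub.le (by linarith [hs.1])]
    ring_nf
  calc ‖powerIntegrand s K x y‖ = |x ^ (2 * s - 1) - y ^ (2 * s - 1)| * K x y := by
        rw [powerIntegrand, norm_mul, Real.norm_eq_abs, Real.norm_of_nonneg (hK.nonneg x y hx hy)]
    _ ≤ x ^ (2 * s - 1) * ((x - y) / y) * (A * (x - y) ^ (-1 - 2 * s) * (x / y) ^ s) := by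
        gcongr
        · exact hK.nonneg x y hx hy
        · exact abs_rpow_sub_rpow_le (by linarith [hs.1]) (by linarith [hs.2]) hy hyx.le
        · exact hle x y hy hyx
    _ ≤ x ^ (2 * s - 1) * ((x - y) / (x / 2)) * (A * (x - y) ^ (-1 - 2 * s) * 2 ^ s) := by
        have := hs.1.le
        gcongr
    _ = x ^ (2 * s - 1) / (x / 2) * (A * 2 ^ s) * (x - y) ^ (-(2 * s)) := by
        rw [hpow]
        ring

lemma exists_norm_setIntegral_powerIntegrand_le (hK : IsStableLikeKernel s K)
    (hs : s ∈ Ioo (0 : ℝ) 1) (hx : 0 < x) :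
    ∃ M, ∀ ε ∈ Ioo 0 (x / 2),
      ‖∫ y in Ico (x - ε) (x ^ 2 / (x + ε)), powerIntegrand s K x y‖ ≤ M * ε ^ (2 - 2 * s) := by
  obtain ⟨C, hC, hbound⟩ := hK.exists_norm_powerIntegrand_le hs hx
  refine ⟨C * 2 ^ (2 * s) / x, fun ε ⟨hε, hεx⟩ => ?_⟩
  have hupper : x ^ 2 / (x + ε) ≤ x - ε / 2 := by
    rw [div_le_iff₀ (by linarith)]
    nlinarith
  have hlength : x ^ 2 / (x + ε) - (x - ε) = ε ^ 2 / (x + ε) := by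
    field_simp
    ring
  have hlocal : ∀ y ∈ Ico (x - ε) (x ^ 2 / (x + ε)),
      ‖powerIntegrand s K x y‖ ≤ C * (ε / 2) ^ (-(2 * s)) := fun y ⟨hly, hyu⟩ =>
    (hbound y ⟨by linarith, by linarith⟩).trans <| mul_le_mul_of_nonneg_left
      (Real.rpow_le_rpow_of_nonpos (by linarith) (by linarith) (by linarith [hs.1])) hC
  calc ‖∫ y in Ico (x - ε) (x ^ 2 / (x + ε)), powerIntegrand s K x y‖
      ≤ C * (ε / 2) ^ (-(2 * s)) * (ε ^ 2 / (x + ε)) := by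
        have h := norm_setIntegral_le_of_norm_le_const (μ := volume) measure_Ico_lt_top hlocal
        rwa [Real.volume_real_Ico, hlength, max_eq_left (by positivity)] at h
    _ ≤ C * (ε / 2) ^ (-(2 * s)) * (ε ^ 2 / x) := by
        gcongr
        linarith
    _ = C * 2 ^ (2 * s) / x * ε ^ (2 - 2 * s) := by
        rw [Real.div_rpow hε.le two_pos.le, Real.rpow_neg two_pos.le, Real.rpow_neg hε.le,
          Real.rpow_sub hε, Real.rpow_two]
        field_simp

theorem hasPV1_rpow (hK : IsStableLikeKernel s K) (hs : s ∈ Ioo (0 : ℝ) 1) (hx : 0 < x) :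
    HasPV1 K (fun t => t ^ (2 * s - 1)) x 0 := by
  obtain ⟨M, hM⟩ := hK.exists_norm_setIntegral_powerIntegrand_le hs hx
  have hexp : 0 < 2 - 2 * s := by linarith [hs.2]
  have hlim : Tendsto (fun ε : ℝ => M * ε ^ (2 - 2 * s)) (𝓝[>] 0) (𝓝 0) := by
    have h := (Real.continuousAt_rpow_const 0 _ (Or.inr hexp.le)).tendsto.const_mul M
    rw [Real.zero_rpow hexp.ne', mul_zero] at h
    exact h.mono_left nhdsWithin_le_nhds
  refine squeeze_zero_norm' ?_ hlim
  filter_upwards [Ioo_mem_nhdsGT (half_pos hx)] with ε hε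
  have htruncated := hK.setIntegral_powerIntegrand_of_lt_abs_sub hs hε.1
    (hε.2.trans (half_lt_self hx))
  simp only [powerIntegrand] at htruncated
  rw [htruncated, norm_neg]
  exact hM ε hε

section Cutoff

variable {η : ℝ → ℝ} {r : ℝ}

lemma integrableOn_one_sub_mul_rpow_mul (hK : IsStableLikeKernel s K) (hs : s ∈ Ioo (0 : ℝ) 1)
    (hη : Measurable η) (hη_mem : ∀ y, 0 ≤ η y ∧ η y ≤ 1) (hη_one : ∀ y ∈ Icc 0 r, η y = 1)
    (hx : 0 < x) (hxr : x < r) :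
    IntegrableOn (fun y => (1 - η y) * y ^ (2 * s - 1) * K x y) (Ioi 0) := by
  have hfar : IntegrableOn (fun y => (1 - η y) * y ^ (2 * s - 1) * K x y) (Ioi r) := by
    simp only [mul_assoc]
    refine (hK.integrableOn_Ioi_rpow_mul hs.1 hx (by linarith [hs.2]) hxr).bdd_mul (c := 1)
      (Measurable.aestronglyMeasurable (by fun_prop)) (.of_forall fun y => ?_)
    rw [Real.norm_eq_abs, abs_le]
    constructor <;> linarith [hη_mem y]
  refine hfar.of_forall_sdiff_eq_zero measurableSet_Ioi fun y ⟨hy, hyr⟩ => ?_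
  rw [hη_one y ⟨le_of_lt hy, not_lt.1 hyr⟩, sub_self, zero_mul, zero_mul]

theorem hasPV1_cutoff_mul_rpow (hK : IsStableLikeKernel s K) (hs : s ∈ Ioo (0 : ℝ) 1)
    (hη : Measurable η) (hη_mem : ∀ y, 0 ≤ η y ∧ η y ≤ 1) (hη_one : ∀ y ∈ Icc 0 r, η y = 1)
    (hx : 0 < x) (hxr : x < r) :
    HasPV1 K (fun t => η t * t ^ (2 * s - 1)) x
      (∫ y in Ioi (0 : ℝ), (1 - η y) * y ^ (2 * s - 1) * K x y) := by
  have hvanish : (fun t => (1 - η t) * t ^ (2 * s - 1)) =ᶠ[𝓝 x] 0 := by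
    filter_upwards [Ioo_mem_nhds hx hxr] with t ht
    rw [hη_one t (Ioo_subset_Icc_self ht), sub_self, zero_mul, Pi.zero_apply]
  have h := hasPV1_sub_of_eventuallyEq_zero (hK.hasPV1_rpow hs hx)
    (fun ε hε => hK.integrableOn_powerIntegrand_of_lt_abs_sub hs hx hε)
    (hK.integrableOn_one_sub_mul_rpow_mul hs hη hη_mem hη_one hx hxr) hvanish
  rw [zero_add] at h
  convert h using 2 with t
  ring

lemma div_le_integral_one_sub_mul_rpow_mul {R m : ℝ} (hK : IsStableLikeKernel s K)
    (hη_mem : ∀ y, 0 ≤ η y ∧ η y ≤ 1) (hη_zero : ∀ y, R ≤ y → η y = 0) (hx : 0 < x) (hR : 0 < R)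
    (hint : IntegrableOn (fun y => (1 - η y) * y ^ (2 * s - 1) * K x y) (Ioi 0))
    (hm : ∀ y, R ≤ y → m * y ^ (-1 - 2 * s) ≤ K x y) :
    m / R ≤ ∫ y in Ioi (0 : ℝ), (1 - η y) * y ^ (2 * s - 1) * K x y := by
  have htail : ∀ y ∈ Ioi R, m * y ^ (-2 : ℝ) ≤ (1 - η y) * y ^ (2 * s - 1) * K x y := by
    intro y (hRy : R < y)
    have hy : 0 < y := hR.trans hRy
    calc m * y ^ (-2 : ℝ) = y ^ (2 * s - 1) * (m * y ^ (-1 - 2 * s)) := by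
          rw [mul_left_comm, ← Real.rpow_add hy]
          ring_nf
      _ ≤ y ^ (2 * s - 1) * K x y := by
          gcongr
          exact hm y hRy.le
      _ = (1 - η y) * y ^ (2 * s - 1) * K x y := by rw [hη_zero y hRy.le, sub_zero, one_mul]
  have hsub : Ioi R ⊆ Ioi 0 := Ioi_subset_Ioi hR.le
  calc m / R = ∫ y in Ioi R, m * y ^ (-2 : ℝ) := by
        rw [integral_const_mul, integral_Ioi_rpow_of_lt (by norm_num) hR,
          show (-2 : ℝ) + 1 = -1 by norm_num, Real.rpow_neg_one, neg_div_neg_eq, div_one,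
          div_eq_mul_inv]
    _ ≤ ∫ y in Ioi R, (1 - η y) * y ^ (2 * s - 1) * K x y :=
        setIntegral_mono_on ((integrableOn_Ioi_rpow_of_lt (by norm_num) hR).const_mul m)
          (hint.mono_set hsub) measurableSet_Ioi htail
    _ ≤ ∫ y in Ioi (0 : ℝ), (1 - η y) * y ^ (2 * s - 1) * K x y := by
        refine setIntegral_mono_set hint ?_ hsub.eventuallyLE
        filter_upwards [ae_restrict_mem measurableSet_Ioi] with y hy
        exact mul_nonneg (mul_nonneg (sub_nonneg.2 (hη_mem y).2) (Real.rpow_nonneg (le_of_lt hy) _))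
          (hK.nonneg x y hx hy)

theorem exists_hasPV1_cutoff_mul_rpow {R : ℝ} (hK : IsStableLikeKernel s K)
    (hs : s ∈ Ioo (0 : ℝ) 1) (hη : Measurable η) (hη_mem : ∀ y, 0 ≤ η y ∧ η y ≤ 1)
    (hη_one : ∀ y ∈ Icc 0 r, η y = 1) (hη_zero : ∀ y, R ≤ y → η y = 0) (hR : 0 < R)
    (hx : x ∈ Ioo 0 r) :
    ∃ l, HasPV1 K (fun t => η t * t ^ (2 * s - 1)) x l ∧
      ∀ m, (∀ y, R ≤ y → m * y ^ (-1 - 2 * s) ≤ K x y) → m / R ≤ l :=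
  ⟨_, hK.hasPV1_cutoff_mul_rpow hs hη hη_mem hη_one hx.1 hx.2, fun _ hm =>
    hK.div_le_integral_one_sub_mul_rpow_mul hη_mem hη_zero hx.1 hR
      (hK.integrableOn_one_sub_mul_rpow_mul hs hη hη_mem hη_one hx.1 hx.2) hm⟩

end Cutoff

end IsStableLikeKernel

section LowerBounds

variable {s x y : ℝ}

lemma mul_rpow_le_regionalKer1 (hs : s ∈ Ioo (0 : ℝ) 1) (hx : 0 < x) (hxy : x < y) :
    cNs 1 s * y ^ (-1 - 2 * s) ≤ regionalKer1 s x y := by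
  have hc := cNs_pos 1 hs
  rw [regionalKer1, abs_sub_comm, abs_of_pos (sub_pos.2 hxy)]
  gcongr cNs 1 s * ?_
  exact Real.rpow_le_rpow_of_nonpos (sub_pos.2 hxy) (by linarith) (by linarith [hs.1])

lemma mul_log_mul_rpow_le_k1 {r : ℝ} (hs : s ∈ Ioo (0 : ℝ) 1) (hx : 0 < x) (hxr : x ≤ r)
    (hry : r ≤ y) :
    cNs 1 s * (2 * s * 4 ^ (-1 - 2 * s)) * Real.log (r / x) * y ^ (-1 - 2 * s) ≤ k1 s x y := by
  have hs0 := hs.1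
  have hc := cNs_pos 1 hs
  calc cNs 1 s * (2 * s * 4 ^ (-1 - 2 * s)) * Real.log (r / x) * y ^ (-1 - 2 * s)
      = cNs 1 s * (2 * s) * (4 ^ (-1 - 2 * s) * y ^ (-1 - 2 * s) * Real.log (r / x)) := by ring
    _ ≤ cNs 1 s * (2 * s) * ∫ t in Ioi (0 : ℝ), exteriorDensity s x y t := by
        gcongr
        exact log_mul_rpow_le_integral_exteriorDensity hs0 hx hxr hry
    _ = k1 s x y :=
        (k1_eq_integral_exteriorDensity hs0 hx (hx.trans_le (hxr.trans hry))).symm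

lemma two_mul_mul_four_rpow_le_one (hs : s ∈ Ioo (0 : ℝ) 1) :
    2 * s * (4 : ℝ) ^ (-1 - 2 * s) ≤ 1 := by
  have hpow : (4 : ℝ) ^ (-1 - 2 * s) ≤ 4 ^ (-1 : ℝ) :=
    Real.rpow_le_rpow_of_exponent_le (by norm_num) (by linarith [hs.1])
  rw [Real.rpow_neg_one] at hpow
  nlinarith [hs.1, hs.2]

lemma logNeg_div_eq_log_div {r : ℝ} (hx : 0 < x) (hxr : x ≤ r) :
    logNeg (x / r) = Real.log (r / x) := by
  rw [logNeg, ← Real.log_inv, inv_div]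
  exact max_eq_right (Real.log_nonneg ((one_le_div hx).2 hxr))

lemma mul_one_add_logNeg_mul_rpow_le_neumannKer1 {r : ℝ} (hs : s ∈ Ioo (0 : ℝ) 1) (hx : 0 < x)
    (hxr : x < r) (hry : r ≤ y) :
    cNs 1 s * (2 * s * 4 ^ (-1 - 2 * s)) * (1 + logNeg (x / r)) * y ^ (-1 - 2 * s) ≤
      neumannKer1 s x y := by
  have hc := cNs_pos 1 hs
  have hy : 0 < y := hx.trans (hxr.trans_le hry)
  have hregional : cNs 1 s * (2 * s * 4 ^ (-1 - 2 * s)) * y ^ (-1 - 2 * s) ≤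
      regionalKer1 s x y :=
    le_trans (by gcongr; exact mul_le_of_le_one_right hc.le (two_mul_mul_four_rpow_le_one hs))
      (mul_rpow_le_regionalKer1 hs hx (hxr.trans_le hry))
  rw [logNeg_div_eq_log_div hx hxr.le, mul_one_add, add_mul]
  exact add_le_add hregional (mul_log_mul_rpow_le_k1 hs hx hxr.le hry)

end LowerBounds

theorem one_dim_supersolution_general {s r₀ : ℝ} (hs : s ∈ Ioo (0 : ℝ) 1) (hr₀ : 0 < r₀)
    {K : ℝ → ℝ → ℝ} (hK : K = neumannKer1 s ∨ K = regionalKer1 s) :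
    ∃ c > (0 : ℝ), ∀ η : ℝ → ℝ, Measurable η →
      (∀ x, 0 ≤ η x ∧ η x ≤ 1) → (∀ x ∈ Icc (0 : ℝ) r₀, η x = 1) →
      (∀ x : ℝ, 2 * r₀ ≤ x → η x = 0) →
      ∀ x ∈ Ioo (0 : ℝ) r₀, ∃ l : ℝ,
        HasPV1 K (fun t => η t * t ^ (2 * s - 1)) x l ∧ c ≤ l ∧
        (K = neumannKer1 s → c * (1 + logNeg (x / r₀)) ≤ l) := by
  have hs0 := hs.1
  have hc := cNs_pos 1 hs
  have hstable : IsStableLikeKernel s K := by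
    rcases hK with rfl | rfl
    exacts [isStableLikeKernel_neumannKer1 hs, isStableLikeKernel_regionalKer1 hs]
  have hregional_le : ∀ x y, regionalKer1 s x y ≤ K x y := by
    rcases hK with rfl | rfl
    exacts [fun x y => le_add_of_nonneg_right (k1_nonneg hs x y), fun _ _ => le_rfl]
  refine ⟨cNs 1 s * (2 * s * 4 ^ (-1 - 2 * s)) / (2 * r₀), by positivity,
    fun η hη hη_mem hη_one hη_zero x hx => ?_⟩
  obtain ⟨l, hpv, hlower⟩ :=
    hstable.exists_hasPV1_cutoff_mul_rpow hs hη hη_mem hη_one hη_zero (by positivity) hx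
  refine ⟨l, hpv, ?_, ?_⟩
  · calc cNs 1 s * (2 * s * 4 ^ (-1 - 2 * s)) / (2 * r₀) ≤ cNs 1 s / (2 * r₀) := by
          gcongr
          exact mul_le_of_le_one_right hc.le (two_mul_mul_four_rpow_le_one hs)
      _ ≤ l := hlower _ fun y hy =>
          (mul_rpow_le_regionalKer1 hs hx.1 (by linarith [hx.2])).trans (hregional_le x y)
  · rintro rfl
    rw [div_mul_eq_mul_div]
    exact hlower _ fun y hy =>
      mul_one_add_logNeg_mul_rpow_le_neumannKer1 hs hx.1 hx.2 (by linarith)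

/-- **1D supersolution** (Lemma 5.2): `φ̄(x) = η(x) x^{2s-1}` satisfies
`L_Ω φ̄ ≥ c̄` in `(0,r₀)`, with the logarithmic improvement
`L_Ω φ̄ ≥ c̄ (1 + log⁻(x/r₀))` for the Neumann kernel. -/
theorem one_dim_supersolution
    (s r₀ : ℝ) (hs : s ∈ Set.Ioo (1 / 2 : ℝ) 1) (hr₀ : 0 < r₀)
    (K : ℝ → ℝ → ℝ) (hK : K = neumannKer1 s ∨ K = regionalKer1 s) :
    ∃ c > (0:ℝ), ∀ η : ℝ → ℝ, ContDiff ℝ (⊤ : ℕ∞) η →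
      (∀ x, 0 ≤ η x ∧ η x ≤ 1) → (∀ x ∈ Set.Icc (0:ℝ) r₀, η x = 1) →
      (∀ x : ℝ, 2 * r₀ ≤ x → η x = 0) →
      ∀ x ∈ Set.Ioo (0:ℝ) r₀, ∃ l : ℝ,
        HasPV1 K (fun t => η t * t ^ (2 * s - 1)) x l ∧ c ≤ l ∧
        (K = neumannKer1 s → c * (1 + logNeg (x / r₀)) ≤ l) := by
  obtain ⟨c, hc, hbound⟩ := one_dim_supersolution_general ⟨by linarith [hs.1], hs.2⟩ hr₀ hK
  exact ⟨c, hc, fun η hη => hbound η hη.continuous.measurable⟩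

end
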